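/- arXiv:1812.09967 — 3 statements merged into one kernel-verified Lean document; each statement's English description precedes it below -/
import Mathlib

section
/- Let ℓ ≥ 1 and k ≥ 3^ℓ be integers and set R = kℓ + 1. Let K' = K − 𝟙πᵀ, where 𝟙πᵀ ∈ ℝ^{V×V} is the rank-one matrix whose (u,v) entry is π(v) (the projection onto the stationary distribution; the maximum-magnitude eigenvalue of K' equals that of K once the trivial eigenvalue 1 is excluded). Let ρ ≥ 0 be a real number such that the ℓ²→ℓ² operator norm of (K')^{2ℓ} is at most ρ^{2ℓ}, and define β = (k·π_*^{−1/2}/(2·k^{1/(2ℓ)}))·ρ^{2ℓ} + 2/k^{1/(2ℓ)}. Then the symmetric matrix β·Π + (1/m)·A is a 2R-local sum of PSD matrices. (Since (1/m)A = ΠK, this expresses that 2R-local degree-2 sum of squares can deduce ⟨X, KX⟩_π ≥ −β⟨X,X⟩_π, i.e. the bound λ_min(K) ≥ −β.) -/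
/-!
Write `τ = k ^ (1 / (2 l))`, so that `τ ^ 2 ≥ 3`, and `Π = diag(π)`. With `z = y ^ 2`, the identity
`(z - 1) ^ 2 * ∑_{i < n} (n - i) z ^ i = z ^ (n + 1) - (n + 1) z + n` for `n = l - 1` becomes
`l (1 + y)² + ∑_{i < n} (n - i) (y^{i+2} - y^i)² = y^{2l} + 2l y + (2l - 1)`,
and it is used at `y = τ K`, where `y^{2l} = k K^{2l}`.

The matrix `Π q(K)²`, for a polynomial `q` of degree at most `l`, is not local, but it can be
approximated by local squares: pick a center `u ∼ π` and, for each `1 ≤ j ≤ l`, the endpoints of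
`k` independent walks of length `j` from `u`. This spider has at most `k l + 1` vertices. Replacing
`(K^j x)(u)` in `(q(K) x)(u)` by the average of `x` over the `k` endpoints gives a random linear
form; its expected square is `Π q(K)²` plus covariance terms `c² (Π - Π K^{2j})`, where
`c = q_j / k`, one for each endpoint. Adding the 2-local matrices `c² (Π + Π K^{2j})` turns the
error into `(2 / k) (∑_{j ≥ 1} q_j²) Π`. The difference of two independent spiders, on at most
`2 (k l + 1)` vertices, allows one to subtract in addition any fraction `θ ∈ [0, 1]` of the square
of the mean, `q(1)² π πᵀ`. Choosing `θ` so that exactly `k π πᵀ` is subtracted in total, and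
bounding the total error by `2l + 1`, one finds that `k Π K^{2l} - k π πᵀ + 2lτ Π K + 4l Π` is
`2 (k l + 1)`-local.

Finally `(K')^{2l} = K^{2l} - 𝟙πᵀ`, and each row of `(K')^{2l}` has `ℓ¹` norm at most
`√|V| ρ^{2l} ≤ π_*^{-1/2} ρ^{2l}`. By diagonal dominance `π_*^{-1/2} ρ^{2l} Π - Π (K')^{2l}` is
2-local. Adding `k` times this to the certificate and dividing by `2lτ` gives the theorem, up to a
nonnegative multiple of `Π` coming from `1 / l ≤ 1`.
-/

section WeightedGraph

variable {V : Type*} [Fintype V] [DecidableEq V] [Nonempty V]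

/-- The (weighted) degree `deg(u) = ∑_v A_{uv}` of a weighted graph `A`. -/
noncomputable def gdeg (A : Matrix V V ℝ) (u : V) : ℝ := ∑ v, A u v

/-- The total weight `m = ∑_u deg(u)`. -/
noncomputable def gm (A : Matrix V V ℝ) : ℝ := ∑ u, gdeg A u

/-- The stationary distribution `π(u) = deg(u)/m` of the random walk on `A`. -/
noncomputable def gpi (A : Matrix V V ℝ) (u : V) : ℝ := gdeg A u / gm A

/-- `π_* = min_u π(u)`. -/
noncomputable def gpiStar (A : Matrix V V ℝ) : ℝ :=
  Finset.univ.inf' Finset.univ_nonempty (gpi A)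

/-- The random-walk transition matrix `K = D⁻¹A`, i.e. `K_{uv} = A_{uv}/deg(u)`. -/
noncomputable def gK (A : Matrix V V ℝ) : Matrix V V ℝ :=
  Matrix.of fun u v => A u v / gdeg A u

/-- The `ℓ² → ℓ²` operator norm (spectral norm) of a real square matrix. -/
noncomputable def l2opNorm (M : Matrix V V ℝ) : ℝ :=
  ‖Matrix.toEuclideanCLM (𝕜 := ℝ) M‖

/-- A symmetric matrix `M` is an `R`-local sum of PSD matrices if it is a finite sum
`M = ∑ i, M_i` of positive semidefinite matrices, each supported on a set `S_i` of at
most `R` rows/columns.  This is exactly derivability of `xᵀMx ≥ 0` in the `R`-local,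
degree-2 static sum-of-squares proof system. -/
def IsLocalPSDSum (R : ℕ) (M : Matrix V V ℝ) : Prop :=
  ∃ (n : ℕ) (Ms : Fin n → Matrix V V ℝ) (Ss : Fin n → Finset V),
    M = ∑ i, Ms i ∧ (∀ i, (Ms i).PosSemidef) ∧ (∀ i, (Ss i).card ≤ R) ∧
    (∀ i u v, Ms i u v ≠ 0 → u ∈ Ss i ∧ v ∈ Ss i)

end WeightedGraph

lemma sum_smul_vecMulVec_sub_self {V Ω S : Type*} [Fintype Ω] [CommRing S] {p : Ω → S}
    (hp : ∑ ω, p ω = 1) (z : Ω → V → S) :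
    ∑ ω, ∑ ω', (p ω * p ω') • Matrix.vecMulVec (z ω - z ω') (z ω - z ω')
      = (2 : S) • (∑ ω, p ω • Matrix.vecMulVec (z ω) (z ω)
        - Matrix.vecMulVec (∑ ω, p ω • z ω) (∑ ω, p ω • z ω)) := by
  ext a b
  have hexpand : ∀ ω ω', p ω * p ω' * ((z ω a - z ω' a) * (z ω b - z ω' b))
      = p ω * (z ω a * z ω b) * p ω' + p ω * (p ω' * (z ω' a * z ω' b))
        - p ω * z ω a * (p ω' * z ω' b) - p ω * z ω b * (p ω' * z ω' a) :=
    fun ω ω' => by ring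
  simp only [Matrix.sum_apply, Matrix.smul_apply, Matrix.sub_apply, Matrix.vecMulVec_apply,
    Finset.sum_apply, Pi.smul_apply, Pi.sub_apply, smul_eq_mul, hexpand, Finset.sum_sub_distrib,
    Finset.sum_add_distrib, ← Finset.sum_mul_sum, hp]
  ring

namespace IsLocalPSDSum

variable {V : Type*} {R : ℕ} {M N : Matrix V V ℝ}

lemma of_posSemidef (hM : M.PosSemidef) {S : Finset V} (hS : S.card ≤ R)
    (hsupp : ∀ u v, M u v ≠ 0 → u ∈ S ∧ v ∈ S) : IsLocalPSDSum R M :=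
  ⟨1, fun _ => M, fun _ => S, by simp, fun _ => hM, fun _ => hS, fun _ => hsupp⟩

lemma zero (R : ℕ) : IsLocalPSDSum R (0 : Matrix V V ℝ) :=
  ⟨0, Fin.elim0, Fin.elim0, by simp, Fin.rec0, Fin.rec0, Fin.rec0⟩

lemma add (hM : IsLocalPSDSum R M) (hN : IsLocalPSDSum R N) : IsLocalPSDSum R (M + N) := by
  obtain ⟨n, Ms, Ss, hsum, hpsd, hcard, hsupp⟩ := hM
  obtain ⟨n', Ms', Ss', hsum', hpsd', hcard', hsupp'⟩ := hN
  refine ⟨n + n', Fin.append Ms Ms', Fin.append Ss Ss', ?_, ?_, ?_, ?_⟩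
  · simp [Fin.sum_univ_add, hsum, hsum']
  · exact Fin.addCases (by simpa using hpsd) (by simpa using hpsd')
  · exact Fin.addCases (by simpa using hcard) (by simpa using hcard')
  · exact Fin.addCases (by simpa using hsupp) (by simpa using hsupp')

lemma smul (hM : IsLocalPSDSum R M) {c : ℝ} (hc : 0 ≤ c) : IsLocalPSDSum R (c • M) := by
  obtain ⟨n, Ms, Ss, hsum, hpsd, hcard, hsupp⟩ := hM
  refine ⟨n, fun i => c • Ms i, Ss, by rw [hsum, Finset.smul_sum], fun i => (hpsd i).smul hc,
    hcard, fun i u v h => hsupp i u v fun h0 => h (by simp [h0])⟩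

lemma sum {κ : Type*} (s : Finset κ) {M : κ → Matrix V V ℝ}
    (h : ∀ i ∈ s, IsLocalPSDSum R (M i)) : IsLocalPSDSum R (∑ i ∈ s, M i) :=
  Finset.sum_induction M (IsLocalPSDSum R) (fun _ _ => add) (zero R) h

lemma vecMulVec_self [Finite V] (z : V → ℝ) {S : Finset V} (hS : S.card ≤ R)
    (hz : ∀ v, z v ≠ 0 → v ∈ S) : IsLocalPSDSum R (Matrix.vecMulVec z z) := by
  cases nonempty_fintype V
  refine of_posSemidef (by simpa using Matrix.posSemidef_vecMulVec_self_star z) hS fun u v h => ?_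
  rw [Matrix.vecMulVec_apply] at h
  exact ⟨hz u (left_ne_zero_of_mul h), hz v (right_ne_zero_of_mul h)⟩

section Diagonal

variable [Finite V] [DecidableEq V]

lemma diagonal (hR : 1 ≤ R) {D : V → ℝ} (hD : ∀ v, 0 ≤ D v) :
    IsLocalPSDSum R (Matrix.diagonal D) := by
  cases nonempty_fintype V
  rw [← Matrix.sum_single_eq_diagonal]
  refine sum _ fun v _ => ?_
  have hv : IsLocalPSDSum R (Matrix.vecMulVec (Pi.single v 1) (Pi.single v 1)) :=
    vecMulVec_self _ (S := {v}) (by simpa using hR) fun u hu => by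
      contrapose! hu
      simp_all
  simpa [← Matrix.single_eq_single_vecMulVec_single] using hv.smul (hD v)

lemma smul_diagonal_add_mono {D : V → ℝ} (hR : 1 ≤ R) (hD : ∀ v, 0 ≤ D v) {a b : ℝ} (hab : a ≤ b)
    (h : IsLocalPSDSum R (a • Matrix.diagonal D + M)) :
    IsLocalPSDSum R (b • Matrix.diagonal D + M) := by
  convert ((diagonal hR hD).smul (sub_nonneg.2 hab)).add h using 1
  module

open Matrix in
lemma abs_smul_single_add_smul_single (hR : 2 ≤ R) (r : ℝ) (a b : V) :
    IsLocalPSDSum R (|r| • (Matrix.single a a (1 : ℝ) + Matrix.single b b 1)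
      + r • (Matrix.single a b 1 + Matrix.single b a 1)) := by
  set σ : ℝ := (SignType.sign r : ℝ)
  have hσ : |r| * σ = r := by rw [mul_comm]; exact sign_mul_abs r
  have hσσ : r * σ = |r| := by rw [mul_comm]; exact sign_mul_self r
  let z : V → ℝ := Pi.single a 1 + σ • Pi.single b 1
  have hz : IsLocalPSDSum R (vecMulVec z z) := by
    refine vecMulVec_self z (S := {a, b}) (Finset.card_le_two.trans hR) fun v hv => ?_
    contrapose! hv
    simp_all [z]
  convert hz.smul (abs_nonneg r) using 1
  simp only [z, add_vecMulVec, vecMulVec_add, smul_vecMulVec, vecMulVec_smul,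
    ← single_eq_single_vecMulVec_single, smul_add, smul_smul, ← mul_assoc, hσ, hσσ]
  abel

end Diagonal

lemma diagonal_add_of_sum_abs_le [Fintype V] [DecidableEq V] (hR : 2 ≤ R) {D : V → ℝ}
    (hM : M.IsSymm) (hD : ∀ a, ∑ b, |M a b| ≤ D a) :
    IsLocalPSDSum R (Matrix.diagonal D + M) := by
  have hsplit : Matrix.diagonal D + M = Matrix.diagonal (fun a => D a - ∑ b, |M a b|)
      + ∑ a, ∑ b, (2⁻¹ : ℝ) • (|M a b| • (Matrix.single a a (1 : ℝ) + Matrix.single b b 1)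
        + M a b • (Matrix.single a b 1 + Matrix.single b a 1)) := by
    ext i j
    have hsymm : ∀ a b, M a b = M b a := fun a b => (hM.apply a b).symm
    rcases eq_or_ne i j with rfl | hij
    · simp only [Matrix.add_apply, Matrix.diagonal_apply_eq, smul_add, Matrix.smul_single,
        smul_eq_mul, mul_one, Finset.sum_add_distrib, Matrix.sum_apply, Matrix.single_apply,
        and_self, Finset.sum_ite_irrel, ← Finset.mul_sum, Finset.sum_const_zero,
        Finset.sum_ite_eq', Finset.mem_univ, ↓reduceIte, hsymm _ i, ite_and]
      ring
    · simp only [Matrix.add_apply, ne_eq, hij, not_false_eq_true, Matrix.diagonal_apply_ne,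
        zero_add, smul_add, Matrix.smul_single, smul_eq_mul, mul_one, Finset.sum_add_distrib,
        Matrix.sum_apply, Matrix.single_apply, ite_and, Finset.sum_ite_irrel, ← Finset.mul_sum,
        Finset.sum_const_zero, Finset.sum_ite_eq', Finset.mem_univ, ↓reduceIte, add_zero,
        hsymm j i]
      ring
  rw [hsplit]
  exact (diagonal (by lia) fun a => sub_nonneg.2 (hD a)).add
    (sum _ fun a _ => sum _ fun b _ =>
      (abs_smul_single_add_smul_single hR _ a b).smul (by norm_num))

lemma second_moment_sub_mean {Ω : Type*} [Fintype Ω] {p : Ω → ℝ} [Finite V]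
    (hp0 : ∀ ω, 0 ≤ p ω) (hp1 : ∑ ω, p ω = 1)
    {z : Ω → V → ℝ} {S : Ω → Finset V} (hS : ∀ ω, (S ω).card ≤ R)
    (hz : ∀ ω v, z ω v ≠ 0 → v ∈ S ω) {θ : ℝ} (hθ0 : 0 ≤ θ) (hθ1 : θ ≤ 1) :
    IsLocalPSDSum (2 * R) (∑ ω, p ω • Matrix.vecMulVec (z ω) (z ω)
      - θ • Matrix.vecMulVec (∑ ω, p ω • z ω) (∑ ω, p ω • z ω)) := by
  classical
  have hone : IsLocalPSDSum (2 * R) (∑ ω, p ω • Matrix.vecMulVec (z ω) (z ω)) :=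
    sum _ fun ω _ => (vecMulVec_self _ ((hS ω).trans (by lia)) (hz ω)).smul (hp0 ω)
  have htwo : IsLocalPSDSum (2 * R)
      (∑ ω, ∑ ω', (p ω * p ω') • Matrix.vecMulVec (z ω - z ω') (z ω - z ω')) := by
    refine sum _ fun ω _ => sum _ fun ω' _ =>
      (vecMulVec_self _ (S := S ω ∪ S ω') ?_ fun v hv => ?_).smul (mul_nonneg (hp0 ω) (hp0 ω'))
    · linarith [Finset.card_union_le (S ω) (S ω'), hS ω, hS ω']
    · contrapose! hv
      rw [Finset.notMem_union] at hv
      simp [not_imp_comm.1 (hz ω v) hv.1, not_imp_comm.1 (hz ω' v) hv.2]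
  rw [sum_smul_vecMulVec_sub_self hp1] at htwo
  convert (hone.smul (sub_nonneg.2 hθ1)).add (htwo.smul (c := θ / 2) (by positivity)) using 1
  module

end IsLocalPSDSum

section Independence

variable {ι V S : Type*} [Fintype ι] [DecidableEq ι] [Fintype V] [CommRing S]
  {P : ι → V → S}

lemma sum_prod_mul_prod_eq_prod_sum (hP : ∀ s, ∑ v, P s v = 1) (f : ι → V → S) (A : Finset ι) :
    ∑ w : ι → V, (∏ r, P r (w r)) * ∏ s ∈ A, f s (w s) = ∏ s ∈ A, ∑ v, P s v * f s v := by
  have hfactor : ∀ s, (if s ∈ A then ∑ v, P s v * f s v else 1)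
      = ∑ v, P s v * if s ∈ A then f s v else 1 := fun s => by split_ifs <;> simp [hP]
  rw [← Fintype.prod_ite_mem, Finset.prod_congr rfl fun s _ => hfactor s, Fintype.prod_sum]
  refine Finset.sum_congr rfl fun w _ => ?_
  rw [Finset.prod_mul_distrib, Fintype.prod_ite_mem]

lemma sum_prod_mul_apply (hP : ∀ s, ∑ v, P s v = 1) (f : V → S) (s : ι) :
    ∑ w : ι → V, (∏ r, P r (w r)) * f (w s) = ∑ v, P s v * f v := by
  simpa using sum_prod_mul_prod_eq_prod_sum hP (fun _ => f) {s}

lemma sum_prod_mul_apply_mul_apply (hP : ∀ s, ∑ v, P s v = 1) (f g : V → S) {s t : ι}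
    (hst : s ≠ t) :
    ∑ w : ι → V, (∏ r, P r (w r)) * (f (w s) * g (w t))
      = (∑ v, P s v * f v) * ∑ v, P t v * g v := by
  simpa [Finset.prod_pair hst, hst.symm] using
    sum_prod_mul_prod_eq_prod_sum hP (fun r => if r = s then f else g) {s, t}

/-- The covariances of distinct summands vanish. -/
lemma sum_prod_mul_sum_mul_sum (hP : ∀ s, ∑ v, P s v = 1) (f g : ι → V → S) :
    ∑ w : ι → V, (∏ r, P r (w r)) * ((∑ s, f s (w s)) * ∑ s, g s (w s))
      = (∑ s, ∑ v, P s v * f s v) * (∑ s, ∑ v, P s v * g s v)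
        + ∑ s, (∑ v, P s v * (f s v * g s v)
          - (∑ v, P s v * f s v) * ∑ v, P s v * g s v) := by
  have hcov : ∀ s t, ∑ w : ι → V, (∏ r, P r (w r)) * (f s (w s) * g t (w t))
      = (∑ v, P s v * f s v) * (∑ v, P t v * g t v)
        + if s = t then ∑ v, P s v * (f s v * g s v)
          - (∑ v, P s v * f s v) * ∑ v, P s v * g s v else 0 := by
    intro s t
    rcases eq_or_ne s t with rfl | hst
    · simp [sum_prod_mul_apply hP fun v => f s v * g s v]
    · simp [sum_prod_mul_apply_mul_apply hP _ _ hst, hst]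
  have hexpand : ∀ w : ι → V, (∏ r, P r (w r)) * ((∑ s, f s (w s)) * ∑ s, g s (w s))
      = ∑ s, ∑ t, (∏ r, P r (w r)) * (f s (w s) * g t (w t)) := fun w => by
    rw [Finset.sum_mul_sum]
    simp only [Finset.mul_sum]
  simp only [hexpand]
  rw [Finset.sum_comm, Finset.sum_congr rfl fun s _ => Finset.sum_comm]
  simp only [hcov, Finset.sum_add_distrib, Finset.sum_ite_eq, Finset.mem_univ, if_true,
    Finset.sum_mul_sum]

end Independence

section Sampling

variable {ι V : Type*} [Fintype ι] [DecidableEq V]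

/-- The sampled linear form `x ↦ ∑ s, c s * x (w s)`, as a coefficient vector. -/
def sampleVec (c : ι → ℝ) (w : ι → V) : V → ℝ := ∑ s, c s • Pi.single (w s) 1

lemma mem_image_of_sampleVec_ne_zero {c : ι → ℝ} {w : ι → V} {v : V} (h : sampleVec c w v ≠ 0) :
    v ∈ Finset.univ.image w := by
  contrapose! h
  have hv : ∀ s, v ≠ w s := by simpa [eq_comm] using h
  simp [sampleVec, hv]

variable [DecidableEq ι] [Fintype V] {P : ι → V → ℝ}

lemma sum_prod_smul_sampleVec (hP : ∀ s, ∑ v, P s v = 1) (c : ι → ℝ) :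
    ∑ w, (∏ r, P r (w r)) • sampleVec c w = ∑ s, c s • P s := by
  ext a
  simp only [sampleVec, Finset.sum_apply, Pi.smul_apply, smul_eq_mul, Finset.mul_sum]
  rw [Finset.sum_comm]
  refine Finset.sum_congr rfl fun s _ => ?_
  rw [sum_prod_mul_apply hP fun v => c s * (Pi.single v 1 : V → ℝ) a]
  simp [Pi.single_apply, mul_comm]

lemma sum_prod_smul_vecMulVec_sampleVec (hP : ∀ s, ∑ v, P s v = 1) (c : ι → ℝ) :
    ∑ w, (∏ r, P r (w r)) • Matrix.vecMulVec (sampleVec c w) (sampleVec c w)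
      = Matrix.vecMulVec (∑ s, c s • P s) (∑ s, c s • P s)
        + ∑ s, c s ^ 2 • (Matrix.diagonal (P s) - Matrix.vecMulVec (P s) (P s)) := by
  ext a b
  have hmoment := sum_prod_mul_sum_mul_sum hP
    (fun s v => c s * (Pi.single v 1 : V → ℝ) a) (fun s v => c s * (Pi.single v 1 : V → ℝ) b)
  have hdiag : ∀ s, ∑ v, P s v * (c s * (Pi.single v 1 : V → ℝ) a
      * (c s * (Pi.single v 1 : V → ℝ) b)) = c s ^ 2 * Matrix.diagonal (P s) a b := fun s => by
    rcases eq_or_ne a b with rfl | hab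
    · simp only [Pi.single_apply, mul_ite, mul_one, mul_zero, ite_mul, zero_mul,
        Finset.sum_ite_eq, Finset.mem_univ, ↓reduceIte, Matrix.diagonal_apply_eq]
      ring
    · simp [Pi.single_apply, hab]
  have hmean : ∀ a s, ∑ v, P s v * (c s * (Pi.single v 1 : V → ℝ) a) = c s * P s a := fun a s => by
    simp [Pi.single_apply, mul_comm]
  simp only [hdiag, hmean] at hmoment
  simp only [Matrix.sum_apply, Matrix.add_apply, Matrix.smul_apply, Matrix.sub_apply,
    Matrix.vecMulVec_apply, sampleVec, Finset.sum_apply, Pi.smul_apply, smul_eq_mul, hmoment]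
  congr 1
  exact Finset.sum_congr rfl fun s _ => by ring

end Sampling

/-- `K` is the transition matrix of a Markov chain that is reversible with respect to the weights
`π`. The weights are not required to be nonnegative or to sum to one; where they have to be a
probability vector, this is the hypothesis `π ∈ stdSimplex ℝ V`. -/
structure IsReversibleChain {V : Type*} [Fintype V] [DecidableEq V] (K : Matrix V V ℝ)
    (π : V → ℝ) : Prop where
  mem_rowStochastic : K ∈ Matrix.rowStochastic ℝ V
  detailed_balance : ∀ a b, π a * K a b = π b * K b a

namespace IsReversibleChain

open Matrix

variable {V : Type*} [Fintype V] [DecidableEq V] {K : Matrix V V ℝ} {π : V → ℝ}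

lemma nonneg (h : IsReversibleChain K π) (a b : V) : 0 ≤ K a b :=
  nonneg_of_mem_rowStochastic h.mem_rowStochastic

lemma sum_row (h : IsReversibleChain K π) (a : V) : ∑ b, K a b = 1 :=
  sum_row_of_mem_rowStochastic h.mem_rowStochastic a

protected lemma one (π : V → ℝ) : IsReversibleChain 1 π where
  mem_rowStochastic := one_mem _
  detailed_balance a b := by
    rcases eq_or_ne a b with rfl | hab
    · rfl
    · simp [hab, hab.symm]

lemma diagonal_mul_isSymm (h : IsReversibleChain K π) : (diagonal π * K).IsSymm :=
  IsSymm.ext fun a b => by simpa only [diagonal_mul] using h.detailed_balance b a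

lemma pow (h : IsReversibleChain K π) (d : ℕ) : IsReversibleChain (K ^ d) π where
  mem_rowStochastic := pow_mem h.mem_rowStochastic d
  detailed_balance := by
    have hcomm : SemiconjBy (diagonal π) K Kᵀ := by
      simpa [SemiconjBy, transpose_mul] using h.diagonal_mul_isSymm.symm
    intro a b
    simpa [diagonal_mul, mul_diagonal, ← transpose_pow, mul_comm] using
      congrFun₂ (hcomm.pow_right d) a b

lemma vecMul_eq (h : IsReversibleChain K π) : π ᵥ* K = π := by
  ext a
  simp only [vecMul, dotProduct, h.detailed_balance _ a, ← Finset.mul_sum, h.sum_row, mul_one]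

lemma sum_smul_row (h : IsReversibleChain K π) : ∑ u, π u • K u = π := by
  rw [← vecMul_eq_sum, h.vecMul_eq]

lemma isLocalPSDSum_diagonal_add (h : IsReversibleChain K π) (hπ : ∀ u, 0 ≤ π u) {R : ℕ}
    (hR : 2 ≤ R) : IsLocalPSDSum R (diagonal π + diagonal π * K) := by
  refine .diagonal_add_of_sum_abs_le hR h.diagonal_mul_isSymm fun a => ?_
  simp only [diagonal_mul, abs_of_nonneg (mul_nonneg (hπ _) (h.nonneg _ _)), ← Finset.mul_sum,
    h.sum_row, mul_one, le_refl]

end IsReversibleChain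

section Star

open Matrix

variable {ι V : Type*} [Fintype ι] {π : V → ℝ}

/-- The probability that a center `ω.1 ∼ π` followed by independent steps from the center along
the kernels `P s` gives the leaves `ω.2 s`. -/
def starWeight (π : V → ℝ) (P : ι → Matrix V V ℝ) (ω : V × (ι → V)) : ℝ :=
  π ω.1 * ∏ s, P s ω.1 (ω.2 s)

variable [Fintype V] [DecidableEq V] {P : ι → Matrix V V ℝ}

lemma starWeight_nonneg (hπ : ∀ u, 0 ≤ π u) (hP : ∀ s, P s ∈ rowStochastic ℝ V)
    (ω : V × (ι → V)) : 0 ≤ starWeight π P ω :=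
  mul_nonneg (hπ _) (Finset.prod_nonneg fun s _ => nonneg_of_mem_rowStochastic (hP s))

variable [DecidableEq ι]

lemma sum_starWeight (hπ : ∑ u, π u = 1) (hP : ∀ s, P s ∈ rowStochastic ℝ V) :
    ∑ ω, starWeight π P ω = 1 := by
  simp only [Fintype.sum_prod_type, starWeight, ← Finset.mul_sum, ← Fintype.prod_sum,
    sum_row_of_mem_rowStochastic (hP _), Finset.prod_const_one, mul_one, hπ]

lemma sum_starWeight_smul_sampleVec (hP : ∀ s, P s ∈ rowStochastic ℝ V)
    (hπP : ∀ s, π ᵥ* P s = π) (c : ι → ℝ) :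
    ∑ ω, starWeight π P ω • sampleVec c ω.2 = (∑ s, c s) • π := by
  simp only [Fintype.sum_prod_type, starWeight, ← smul_smul, ← Finset.smul_sum,
    sum_prod_smul_sampleVec fun s => sum_row_of_mem_rowStochastic (hP s) _]
  simp only [Finset.smul_sum]
  rw [Finset.sum_comm, Finset.sum_smul]
  simp only [smul_comm _ (c _), ← Finset.smul_sum, ← vecMul_eq_sum, hπP]

lemma sum_smul_vecMulVec_row {Q : Matrix V V ℝ} (hQ : (diagonal π * Q).IsSymm) :
    ∑ u, π u • vecMulVec (Q u) (Q u) = diagonal π * Q ^ 2 := by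
  rw [pow_two, ← mul_assoc, ← hQ, transpose_mul, diagonal_transpose]
  ext a b
  rw [mul_apply]
  simp only [Matrix.sum_apply, Matrix.smul_apply, vecMulVec_apply, mul_diagonal, transpose_apply,
    smul_eq_mul, mul_assoc, mul_left_comm (π _)]

lemma sum_starWeight_smul_vecMulVec (hP : ∀ s, IsReversibleChain (P s) π) (c : ι → ℝ) :
    ∑ ω, starWeight π P ω • vecMulVec (sampleVec c ω.2) (sampleVec c ω.2)
      = diagonal π * (∑ s, c s • P s) ^ 2
        + ∑ s, c s ^ 2 • (diagonal π - diagonal π * P s ^ 2) := by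
  have hQ : (diagonal π * ∑ s, c s • P s).IsSymm := by
    simp only [IsSymm, Finset.mul_sum, Matrix.mul_smul, transpose_sum, transpose_smul,
      (hP _).diagonal_mul_isSymm.eq]
  have hdiag : ∀ s, ∑ u, π u • diagonal (P s u) = diagonal π := fun s => by
    conv_rhs => rw [← (hP s).sum_smul_row]
    ext a b
    rcases eq_or_ne a b with rfl | hab <;> simp [Matrix.sum_apply, *]
  simp only [Fintype.sum_prod_type, starWeight, ← smul_smul, ← Finset.smul_sum,
    sum_prod_smul_vecMulVec_sampleVec fun s => (hP s).sum_row _, smul_add,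
    Finset.sum_add_distrib]
  congr 1
  · rw [← sum_smul_vecMulVec_row hQ]
    refine Finset.sum_congr rfl fun u _ => ?_
    have hrow : (∑ s, c s • P s) u = ∑ s, c s • P s u := by
      ext v
      simp [Matrix.sum_apply]
    rw [hrow]
  · simp only [Finset.smul_sum]
    rw [Finset.sum_comm]
    simp only [smul_comm _ (c _ ^ 2), ← Finset.smul_sum, smul_sub, Finset.sum_sub_distrib, hdiag,
      sum_smul_vecMulVec_row (hP _).diagonal_mul_isSymm]

end Star

open Matrix in
/-- The constant term `c₀` is read off at the center of the star, so it adds no sampling error. -/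
lemma IsLocalPSDSum.star {ι V : Type*} [Fintype ι] [Fintype V] [DecidableEq V] {π : V → ℝ}
    {P : ι → Matrix V V ℝ} (hπ : π ∈ stdSimplex ℝ V) (hP : ∀ s, IsReversibleChain (P s) π)
    (c₀ : ℝ) (c : ι → ℝ) {R : ℕ} (hR : Fintype.card ι + 1 ≤ R) {θ : ℝ} (hθ0 : 0 ≤ θ)
    (hθ1 : θ ≤ 1) :
    IsLocalPSDSum (2 * R) (Matrix.diagonal π * (c₀ • 1 + ∑ s, c s • P s) ^ 2
      + (2 * ∑ s, c s ^ 2) • Matrix.diagonal π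
      - (θ * (c₀ + ∑ s, c s) ^ 2) • vecMulVec π π) := by
  classical
  let P' : Option ι → Matrix V V ℝ := fun s => s.elim 1 P
  let c' : Option ι → ℝ := fun s => s.elim c₀ c
  have hP' : ∀ s, IsReversibleChain (P' s) π := Option.rec (.one π) hP
  have hrow : ∀ s, P' s ∈ rowStochastic ℝ V := fun s => (hP' s).mem_rowStochastic
  have hsample := second_moment_sub_mean (starWeight_nonneg hπ.1 hrow) (sum_starWeight hπ.2 hrow)
    (z := fun ω => sampleVec c' ω.2) (S := fun ω => Finset.univ.image ω.2) (R := R)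
    (fun ω => Finset.card_image_le.trans (by simpa using hR))
    (fun ω v => mem_image_of_sampleVec_ne_zero) hθ0 hθ1
  rw [sum_starWeight_smul_vecMulVec hP',
    sum_starWeight_smul_sampleVec hrow fun s => (hP' s).vecMul_eq] at hsample
  have hnoise : IsLocalPSDSum (2 * R)
      (∑ s, c s ^ 2 • (Matrix.diagonal π + Matrix.diagonal π * P s ^ 2)) :=
    sum _ fun s _ => (((hP s).pow 2).isLocalPSDSum_diagonal_add hπ.1 (by lia)).smul (sq_nonneg _)
  convert hsample.add hnoise using 1
  simp only [Fintype.sum_option, P', c', Option.elim, one_pow, mul_one, smul_vecMulVec,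
    vecMulVec_smul, smul_sub, smul_add, Finset.sum_add_distrib, Finset.sum_sub_distrib,
    ← Finset.sum_smul]
  module

section Spider

open Polynomial

lemma aeval_eq_coeff_zero_add_sum {S T : Type*} [CommSemiring S] [Semiring T] [Algebra S T]
    {q : S[X]} {l : ℕ} (hq : q.natDegree ≤ l) (x : T) :
    aeval x q = q.coeff 0 • 1 + ∑ j : Fin l, q.coeff (j + 1) • x ^ (j + 1 : ℕ) := by
  rw [aeval_eq_sum_range' (Nat.lt_succ_of_le hq), Finset.sum_range_succ', Finset.sum_range,
    pow_zero, add_comm]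

variable {V : Type*} [Fintype V] [DecidableEq V] {K : Matrix V V ℝ} {π : V → ℝ} {k l : ℕ}

/-- The star with `k` independent walks of each length `1 ≤ j ≤ l`: the average over the `k`
endpoints estimates `K ^ j`. -/
lemma IsLocalPSDSum.spider (hπ : π ∈ stdSimplex ℝ V) (hK : IsReversibleChain K π) (hk : 0 < k)
    {q : ℝ[X]} (hq : q.natDegree ≤ l) {θ : ℝ} (hθ0 : 0 ≤ θ) (hθ1 : θ ≤ 1) :
    IsLocalPSDSum (2 * (k * l + 1)) (Matrix.diagonal π * aeval K (q ^ 2)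
      + (2 / k * ∑ j : Fin l, q.coeff (j + 1) ^ 2) • Matrix.diagonal π
      - (θ * q.eval 1 ^ 2) • Matrix.vecMulVec π π) := by
  have hk0 : (k : ℝ) ≠ 0 := by positivity
  have hstar := star hπ (P := fun s : Fin k × Fin l => K ^ (s.2 + 1 : ℕ)) (fun s => hK.pow _)
    (q.coeff 0) (fun s => q.coeff (s.2 + 1) / k) (R := k * l + 1) (by simp) hθ0 hθ1
  have heval : q.eval 1 = q.coeff 0 + ∑ s : Fin k × Fin l, q.coeff (s.2 + 1) / k := by
    rw [← coe_aeval_eq_eval, aeval_eq_coeff_zero_add_sum hq]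
    simp [Fintype.sum_prod_type, ← Finset.sum_div, mul_div_cancel_left₀ _ hk0]
  have haeval : aeval K q = q.coeff 0 • 1
      + ∑ s : Fin k × Fin l, (q.coeff (s.2 + 1) / k) • K ^ (s.2 + 1 : ℕ) := by
    simp [aeval_eq_coeff_zero_add_sum hq, Fintype.sum_prod_type, ← Nat.cast_smul_eq_nsmul ℝ,
      Finset.smul_sum, smul_smul, mul_div_cancel₀ _ hk0]
  have hnoise : 2 / k * ∑ j : Fin l, q.coeff (j + 1) ^ 2
      = 2 * ∑ s : Fin k × Fin l, (q.coeff (s.2 + 1) / k) ^ 2 := by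
    simp only [div_pow, ← Finset.sum_div, Fintype.sum_prod_type, Finset.sum_const,
      Finset.card_univ, Fintype.card_fin, nsmul_eq_mul]
    field_simp
  rwa [map_pow, haeval, heval, hnoise]

lemma IsLocalPSDSum.aeval_of_sum_sq (hπ : π ∈ stdSimplex ℝ V) (hK : IsReversibleChain K π)
    (hk : 0 < k) {κ : Type*} {s : Finset κ} {w : κ → ℝ} (hw : ∀ i ∈ s, 0 ≤ w i) {q : κ → ℝ[X]}
    (hq : ∀ i ∈ s, (q i).natDegree ≤ l) {p : ℝ[X]} (hp : p = ∑ i ∈ s, w i • q i ^ 2) {c N : ℝ}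
    (hc0 : 0 ≤ c) (hc : c ≤ p.eval 1)
    (hN : 2 / k * ∑ i ∈ s, w i * ∑ j : Fin l, (q i).coeff (j + 1) ^ 2 ≤ N) :
    IsLocalPSDSum (2 * (k * l + 1)) (Matrix.diagonal π * aeval K p + N • Matrix.diagonal π
      - c • Matrix.vecMulVec π π) := by
  have hsum : IsLocalPSDSum (2 * (k * l + 1)) (∑ i ∈ s, w i • _) := sum s fun i hi =>
    (spider hπ hK hk (hq i hi) (div_nonneg hc0 (hc0.trans hc))
      (div_le_one_of_le₀ hc (hc0.trans hc))).smul (hw i hi)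
  have hscale : c / p.eval 1 * ∑ i ∈ s, w i * (q i).eval 1 ^ 2 = c := by
    have heval : p.eval 1 = ∑ i ∈ s, w i * (q i).eval 1 ^ 2 := by simp [hp, eval_finsetSum]
    rw [← heval, div_mul_cancel_of_imp fun h => le_antisymm (h ▸ hc) hc0]
  have hlocal : IsLocalPSDSum (2 * (k * l + 1))
      ((2 / k * ∑ i ∈ s, w i * ∑ j : Fin l, (q i).coeff (j + 1) ^ 2) • Matrix.diagonal π
        + (Matrix.diagonal π * aeval K p - c • Matrix.vecMulVec π π)) := by
    convert hsum using 1
    generalize c / p.eval 1 = θ at hscale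
    simp only [← hscale, hp, smul_sub, smul_add, Finset.sum_sub_distrib, Finset.sum_add_distrib,
      smul_smul, map_sum, map_smul, Finset.mul_sum, Matrix.mul_smul, Finset.sum_smul,
      Finset.smul_sum, mul_left_comm θ]
    simp only [mul_left_comm (w _)]
    abel
  convert smul_diagonal_add_mono (by lia) hπ.1 hN hlocal using 1
  abel

end Spider

section Certificate

lemma sub_one_sq_mul_sum_range {S : Type*} [CommRing S] (z : S) (n : ℕ) :
    (z - 1) ^ 2 * ∑ i ∈ Finset.range n, (n - i) * z ^ i = z ^ (n + 1) - (n + 1) * z + n := by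
  induction n with
  | zero => simp
  | succ n ih =>
    have hsucc : ∑ i ∈ Finset.range (n + 1), ((n + 1 : ℕ) - i : S) * z ^ i
        = z * ∑ i ∈ Finset.range n, (n - i : S) * z ^ i + (n + 1) := by
      rw [Finset.sum_range_succ', Finset.mul_sum]
      push_cast
      congr 1
      · exact Finset.sum_congr rfl fun i _ => by ring
      · simp
    rw [hsucc]
    push_cast
    linear_combination z * ih

open Polynomial

/-- The polynomials whose squares, with weights `l - i` for `i < l`, make up the certificate
`τ ^ (2 * l) * X ^ (2 * l) + 2 * l * τ * X + (2 * l - 1)`. The first one, `τ * X + 1`, is spelled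
like the others as a combination of two powers of `X`. -/
noncomputable def certPoly (τ : ℝ) : ℕ → ℝ[X]
  | 0 => C τ * X ^ 1 + C 1 * X ^ 0
  | i + 1 => C (τ ^ (i + 2)) * X ^ (i + 2) + C (-τ ^ i) * X ^ i

lemma sum_smul_certPoly_sq (τ : ℝ) (n : ℕ) :
    ∑ i ∈ Finset.range (n + 1), ((n + 1 : ℕ) - i : ℝ) • certPoly τ i ^ 2
      = C (τ ^ (2 * (n + 1))) * X ^ (2 * (n + 1)) + C (2 * (n + 1) * τ) * X
        + C (2 * n + 1 : ℝ) := by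
  set y : ℝ[X] := C τ * X with hy
  have hgeom := sub_one_sq_mul_sum_range (y ^ 2) n
  have hterm : ∀ i, ((n + 1 : ℕ) - (i + 1 : ℕ) : ℝ) • certPoly τ (i + 1) ^ 2
      = (y ^ 2 - 1) ^ 2 * ((n - i : ℝ[X]) * (y ^ 2) ^ i) := fun i => by
    simp only [certPoly, smul_eq_C_mul, hy, C_neg, C_pow, C_sub, C_eq_natCast]
    push_cast
    ring
  rw [Finset.sum_range_succ', Finset.sum_congr rfl fun i _ => hterm i, ← Finset.mul_sum, hgeom]
  simp only [hy, Nat.cast_add, Nat.cast_one, Nat.cast_zero, sub_zero, certPoly, pow_one, map_one,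
    pow_zero, mul_one, smul_eq_C_mul, map_add, map_natCast, map_pow, map_mul, C_ofNat]
  ring

lemma natDegree_certPoly_le (τ : ℝ) (i : ℕ) : (certPoly τ i).natDegree ≤ i + 1 := by
  cases i <;> simp only [certPoly] <;> compute_degree

lemma sum_coeff_binomial_sq_le {m m' : ℕ} (h : m ≠ m') (a b : ℝ) (l : ℕ) :
    ∑ j : Fin l, (C a * X ^ m + C b * X ^ m').coeff (j + 1) ^ 2 ≤ a ^ 2 + b ^ 2 := by
  have hcoeff : ∀ r, (C a * X ^ m + C b * X ^ m').coeff r ^ 2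
      = (if r = m then a ^ 2 else 0) + if r = m' then b ^ 2 else 0 := fun r => by
    simp only [coeff_add, coeff_C_mul, coeff_X_pow]
    split_ifs <;> simp_all
  calc ∑ j : Fin l, (C a * X ^ m + C b * X ^ m').coeff (j + 1) ^ 2
      ≤ ∑ r ∈ Finset.range (l + 1), (C a * X ^ m + C b * X ^ m').coeff r ^ 2 := by
        rw [Finset.sum_range_succ', Finset.sum_range]
        exact le_add_of_nonneg_right (sq_nonneg _)
    _ ≤ a ^ 2 + b ^ 2 := by
        simp only [hcoeff, Finset.sum_add_distrib, Finset.sum_ite_eq']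
        gcongr <;> split_ifs <;> simp [sq_nonneg]

/-- With `l = n + 1` and `k = τ ^ (2 * l)`, the sampling error of the certificate is at most
`2 * l + 1`. -/
lemma sum_certPoly_coeff_sq_le {τ : ℝ} (hτ : 3 ≤ τ ^ 2) (n l : ℕ) :
    2 * ∑ i ∈ Finset.range (n + 1), ((n + 1 : ℕ) - i : ℝ)
        * ∑ j : Fin l, (certPoly τ i).coeff (j + 1) ^ 2
      ≤ (2 * n + 3) * τ ^ (2 * (n + 1)) := by
  have hzero : ∑ j : Fin l, (certPoly τ 0).coeff (j + 1) ^ 2 ≤ τ ^ 2 + 1 := by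
    simpa only [certPoly, one_pow] using sum_coeff_binomial_sq_le one_ne_zero τ 1 l
  have hsucc : ∀ i, ∑ j : Fin l, (certPoly τ (i + 1)).coeff (j + 1) ^ 2
      ≤ 5 / 2 * ((τ ^ 2 - 1) ^ 2 * (τ ^ 2) ^ i) := fun i => by
    have hquad : (τ ^ 2) ^ 2 + 1 ≤ 5 / 2 * (τ ^ 2 - 1) ^ 2 := by nlinarith
    calc _ ≤ (τ ^ (i + 2)) ^ 2 + (-τ ^ i) ^ 2 := sum_coeff_binomial_sq_le (by lia) _ _ l
      _ = ((τ ^ 2) ^ 2 + 1) * (τ ^ 2) ^ i := by ring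
      _ ≤ _ := by rw [← mul_assoc]; gcongr
  have hsum : ∑ i ∈ Finset.range n, (n - i : ℝ)
        * ∑ j : Fin l, (certPoly τ (i + 1)).coeff (j + 1) ^ 2
      ≤ 5 / 2 * ((τ ^ 2) ^ (n + 1) - (n + 1) * τ ^ 2 + n) := by
    rw [← sub_one_sq_mul_sum_range, Finset.mul_sum, Finset.mul_sum]
    refine Finset.sum_le_sum fun i hi => ?_
    have hi : (i : ℝ) ≤ n := by exact_mod_cast (Finset.mem_range.1 hi).le
    calc _ ≤ _ := mul_le_mul_of_nonneg_left (hsucc i) (sub_nonneg.2 hi)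
      _ = _ := by ring
  rw [Finset.sum_range_succ', pow_mul]
  simp only [Nat.cast_add, Nat.cast_one, Nat.cast_zero, sub_zero, add_sub_add_right_eq_sub]
  have hfirst := mul_le_mul_of_nonneg_left hzero (by positivity : (0 : ℝ) ≤ n + 1)
  have hlead : 5 * (τ ^ 2) ^ (n + 1) + (7 * n + 2)
      ≤ (2 * n + 3) * (τ ^ 2) ^ (n + 1) + 3 * ((n + 1) * τ ^ 2) := by
    rcases n.eq_zero_or_pos with rfl | hn
    · norm_num
      linarith
    · have hn : (1 : ℝ) ≤ n := by exact_mod_cast hn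
      gcongr <;> nlinarith
  linarith

end Certificate

section ReversibleChain

variable {V : Type*} [Fintype V] [DecidableEq V] {K : Matrix V V ℝ} {π : V → ℝ}

open Polynomial in
lemma IsLocalPSDSum.certificate (hπ : π ∈ stdSimplex ℝ V) (hK : IsReversibleChain K π) {k l : ℕ}
    (hl : 1 ≤ l) {τ : ℝ} (hτ : 0 < τ) (hτ3 : 3 ≤ τ ^ 2) (hτk : τ ^ (2 * l) = k) :
    IsLocalPSDSum (2 * (k * l + 1))
      ((k : ℝ) • (Matrix.diagonal π * K ^ (2 * l)) - (k : ℝ) • Matrix.vecMulVec π π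
        + (2 * l * τ) • (Matrix.diagonal π * K) + (4 * l : ℝ) • Matrix.diagonal π) := by
  obtain ⟨n, rfl⟩ := Nat.exists_eq_add_of_le' hl
  have hk : (0 : ℝ) < k := hτk ▸ by positivity
  have hweight : ∀ i ∈ Finset.range (n + 1), (0 : ℝ) ≤ (n + 1 : ℕ) - i := fun i hi =>
    sub_nonneg.2 (by exact_mod_cast (Finset.mem_range.1 hi).le)
  have hdegree : ∀ i ∈ Finset.range (n + 1), (certPoly τ i).natDegree ≤ n + 1 := fun i hi =>
    (natDegree_certPoly_le τ i).trans (Finset.mem_range.1 hi)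
  have heval : (k : ℝ) ≤ (C (k : ℝ) * X ^ (2 * (n + 1)) + C (2 * (n + 1) * τ) * X
      + C (2 * n + 1 : ℝ)).eval 1 := by
    have hnonneg : 0 ≤ 2 * ((n : ℝ) + 1) * τ + (2 * n + 1) := by positivity
    simp only [eval_add, eval_mul, eval_C, eval_pow, eval_X, one_pow, mul_one]
    linarith
  have hnoise : 2 / k * ∑ i ∈ Finset.range (n + 1), ((n + 1 : ℕ) - i : ℝ)
      * ∑ j : Fin (n + 1), (certPoly τ i).coeff (j + 1) ^ 2 ≤ 2 * n + 3 := by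
    rw [div_mul_eq_mul_div, div_le_iff₀ hk, ← hτk]
    exact sum_certPoly_coeff_sq_le hτ3 n _
  convert aeval_of_sum_sq hπ hK (by exact_mod_cast hk) hweight hdegree
    (hτk ▸ sum_smul_certPoly_sq τ n).symm hk.le heval hnoise using 1
  simp only [map_add, map_mul (aeval K), map_pow, aeval_C, aeval_X, Algebra.algebraMap_eq_smul_one,
    smul_mul_assoc, one_mul, mul_add, Matrix.mul_smul, mul_one]
  push_cast
  module

lemma sub_pow_succ_of_mul_eq {S : Type*} [Ring S] {a e : S} (hae : a * e = e) (hea : e * a = e)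
    (hee : e * e = e) (d : ℕ) : (a - e) ^ (d + 1) = a ^ (d + 1) - e := by
  have hpow (m : ℕ) : a ^ m * e = e := by
    induction m with
    | zero => simp
    | succ m ih => rw [pow_succ, mul_assoc, hae, ih]
  induction d with
  | zero => simp
  | succ d ih =>
    rw [pow_succ, ih, sub_mul, mul_sub, mul_sub, hpow, hea, hee, ← pow_succ]
    abel

namespace IsReversibleChain

open Matrix

lemma sub_stationary_pow_succ (hK : IsReversibleChain K π) (hπ : ∑ v, π v = 1) (d : ℕ) :
    (K - of fun _ v => π v) ^ (d + 1) = K ^ (d + 1) - of fun _ v => π v := by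
  refine sub_pow_succ_of_mul_eq ?_ ?_ ?_ d <;> ext a b
  · simp [mul_apply, ← Finset.sum_mul, hK.sum_row]
  · exact congrFun hK.vecMul_eq b
  · simp [mul_apply, ← Finset.sum_mul, hπ]

lemma diagonal_mul_sub_stationary_pow_succ (hK : IsReversibleChain K π) (hπ : ∑ v, π v = 1)
    (d : ℕ) :
    diagonal π * (K - of fun _ v => π v) ^ (d + 1) = diagonal π * K ^ (d + 1) - vecMulVec π π := by
  rw [hK.sub_stationary_pow_succ hπ, mul_sub]
  congr 1
  ext a b
  simp [vecMulVec_apply]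

/-- With `K' = K - 𝟙πᵀ`, the matrix `B Π - Π K' ^ (2 * l)` is local by diagonal dominance; adding
`k` copies of it to the certificate leaves only `K` to first order. -/
lemma isLocalPSDSum_smul_diagonal_add (hK : IsReversibleChain K π) (hπ : π ∈ stdSimplex ℝ V)
    {k l : ℕ} (hl : 1 ≤ l) {τ : ℝ} (hτ : 0 < τ) (hτ3 : 3 ≤ τ ^ 2) (hτk : τ ^ (2 * l) = k) {B : ℝ}
    (hB : ∀ a, ∑ b, |((K - of fun _ v => π v) ^ (2 * l) : Matrix V V ℝ) a b| ≤ B) :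
    IsLocalPSDSum (2 * (k * l + 1))
      (((k * B + 4 * l) / (2 * l * τ)) • diagonal π + diagonal π * K) := by
  have hpow : diagonal π * (K - of fun _ v => π v) ^ (2 * l)
      = diagonal π * K ^ (2 * l) - vecMulVec π π := by
    obtain ⟨n, rfl⟩ := Nat.exists_eq_add_of_le' hl
    exact hK.diagonal_mul_sub_stationary_pow_succ hπ.2 _
  have hremainder : IsLocalPSDSum (2 * (k * l + 1))
      (diagonal (B • π) + -(diagonal π * (K - of fun _ v => π v) ^ (2 * l))) := by
    refine .diagonal_add_of_sum_abs_le (by lia) ?_ fun a => ?_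
    · rw [hpow]
      exact ((hK.pow _).diagonal_mul_isSymm.sub (transpose_vecMulVec π π)).neg
    · simp only [Matrix.neg_apply, abs_neg, diagonal_mul, abs_mul, abs_of_nonneg (hπ.1 a),
        ← Finset.mul_sum, Pi.smul_apply, smul_eq_mul]
      rw [mul_comm]
      exact mul_le_mul_of_nonneg_right (hB a) (hπ.1 a)
  convert ((IsLocalPSDSum.certificate hπ hK hl hτ hτ3 hτk).add
    (hremainder.smul k.cast_nonneg)).smul (c := (2 * l * τ)⁻¹) (by positivity) using 1
  rw [hpow, diagonal_smul]
  have hl0 : (l : ℝ) ≠ 0 := by positivity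
  match_scalars <;> field_simp <;> ring

end IsReversibleChain

end ReversibleChain

section RandomWalk

variable {V : Type*} [Fintype V]

/-- Test the operator norm on the sign vector of the row. -/
lemma sum_abs_le_l2opNorm_mul_sqrt_card [DecidableEq V] (M : Matrix V V ℝ) (a : V) :
    ∑ b, |M a b| ≤ l2opNorm M * √(Fintype.card V) := by
  let s : EuclideanSpace ℝ V := WithLp.toLp 2 fun b => (SignType.sign (M a b) : ℝ)
  have hs : ‖s‖ ≤ √(Fintype.card V) := by
    rw [EuclideanSpace.norm_eq]
    refine Real.sqrt_le_sqrt ?_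
    calc ∑ b, ‖s b‖ ^ 2 ≤ ∑ _b : V, (1 : ℝ) := by
          refine Finset.sum_le_sum fun b _ => ?_
          rcases lt_trichotomy (M a b) 0 with h | h | h <;> simp [s, h]
      _ = Fintype.card V := by simp
  calc ∑ b, |M a b| = (Matrix.toEuclideanCLM (𝕜 := ℝ) M s) a := by
        simp only [s, Matrix.toEuclideanCLM_toLp, Matrix.mulVec, dotProduct, self_mul_sign]
    _ ≤ ‖(Matrix.toEuclideanCLM (𝕜 := ℝ) M s) a‖ := le_abs_self _
    _ ≤ ‖Matrix.toEuclideanCLM (𝕜 := ℝ) M s‖ := PiLp.norm_apply_le _ a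
    _ ≤ l2opNorm M * ‖s‖ := ContinuousLinearMap.le_opNorm _ _
    _ ≤ l2opNorm M * √(Fintype.card V) := mul_le_mul_of_nonneg_left hs (norm_nonneg _)

variable {A : Matrix V V ℝ}

lemma diagonal_gpi_mul_gK [DecidableEq V] (hrow : ∀ u, 0 < ∑ v, A u v) :
    Matrix.diagonal (gpi A) * gK A = (gm A)⁻¹ • A := by
  ext a b
  have ha : gdeg A a ≠ 0 := (hrow a).ne'
  simp only [Matrix.diagonal_mul, gK, Matrix.of_apply, gpi, Matrix.smul_apply, smul_eq_mul]
  field_simp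

lemma isReversibleChain_gK [DecidableEq V] (hA : A.IsSymm) (hA0 : ∀ u v, 0 ≤ A u v)
    (hrow : ∀ u, 0 < ∑ v, A u v) : IsReversibleChain (gK A) (gpi A) where
  mem_rowStochastic := by
    refine Matrix.mem_rowStochastic_iff_sum.2
      ⟨fun a b => div_nonneg (hA0 a b) (hrow a).le, fun a => ?_⟩
    simp only [gK, Matrix.of_apply, ← Finset.sum_div]
    exact div_self (hrow a).ne'
  detailed_balance a b := by
    have hsymm : (Matrix.diagonal (gpi A) * gK A).IsSymm := by
      rw [diagonal_gpi_mul_gK hrow]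
      exact hA.smul _
    simpa [Matrix.diagonal_mul] using hsymm.apply b a

variable [Nonempty V]

lemma gm_pos (hrow : ∀ u, 0 < ∑ v, A u v) : 0 < gm A :=
  Finset.sum_pos (fun u _ => hrow u) Finset.univ_nonempty

lemma gpi_pos (hrow : ∀ u, 0 < ∑ v, A u v) (u : V) : 0 < gpi A u :=
  div_pos (hrow u) (gm_pos hrow)

lemma gpi_mem_stdSimplex (hrow : ∀ u, 0 < ∑ v, A u v) : gpi A ∈ stdSimplex ℝ V where
  left u := (gpi_pos hrow u).le
  right := by
    simp only [gpi, ← Finset.sum_div]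
    exact div_self (gm_pos hrow).ne'

lemma sqrt_card_le_inv_sqrt_gpiStar (hrow : ∀ u, 0 < ∑ v, A u v) :
    √(Fintype.card V) ≤ (√(gpiStar A))⁻¹ := by
  have hpos : 0 < gpiStar A := (Finset.lt_inf'_iff _).2 fun u _ => gpi_pos hrow u
  have hcard : Fintype.card V * gpiStar A ≤ 1 := by
    rw [← (gpi_mem_stdSimplex hrow).2, ← nsmul_eq_mul]
    exact Finset.card_nsmul_le_sum _ _ _ fun u hu => Finset.inf'_le _ hu
  rw [← Real.sqrt_inv, ← one_div]
  exact Real.sqrt_le_sqrt ((le_div_iff₀ hpos).2 hcard)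

end RandomWalk

lemma mul_add_four_mul_div_le {k l B τ : ℝ} (hk : 0 ≤ k) (hl : 1 ≤ l) (hB : 0 ≤ B) (hτ : 0 < τ) :
    (k * B + 4 * l) / (2 * l * τ) ≤ k * B / (2 * τ) + 2 / τ := by
  have hkB : k * B ≤ k * B * l := le_mul_of_one_le_right (by positivity) hl
  calc (k * B + 4 * l) / (2 * l * τ) ≤ (k * B * l + 4 * l) / (2 * l * τ) := by gcongr
    _ = k * B / (2 * τ) + 2 / τ := by field_simp; ring

theorem sa_maxcut_spectral {V : Type*} [Fintype V] [DecidableEq V] [Nonempty V]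
    (A : Matrix V V ℝ) (hA : A.IsSymm) (hA0 : ∀ u v, 0 ≤ A u v)
    (hrow : ∀ u, 0 < ∑ v, A u v)
    (l k : ℕ) (hl : 1 ≤ l) (hk : 3 ^ l ≤ k)
    (ρ : ℝ) (hρ : 0 ≤ ρ)
    (hop : l2opNorm ((gK A - Matrix.of fun _ v => gpi A v) ^ (2 * l)) ≤ ρ ^ (2 * l)) :
    letI β : ℝ := ((k : ℝ) * (Real.sqrt (gpiStar A))⁻¹
        / (2 * (k : ℝ) ^ ((1 : ℝ) / (2 * (l : ℝ))))) * ρ ^ (2 * l)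
      + 2 / (k : ℝ) ^ ((1 : ℝ) / (2 * (l : ℝ)))
    IsLocalPSDSum (2 * (k * l + 1))
      (β • Matrix.diagonal (gpi A) + (gm A)⁻¹ • A) := by
  set τ : ℝ := (k : ℝ) ^ ((1 : ℝ) / (2 * (l : ℝ))) with hτ_def
  have hk0 : (0 : ℝ) < k := by exact_mod_cast (show 0 < 3 ^ l by positivity).trans_le hk
  have hl1 : (1 : ℝ) ≤ l := by exact_mod_cast hl
  have hτ : 0 < τ := Real.rpow_pos_of_pos hk0 _
  have hτk : τ ^ (2 * l) = k := by
    rw [hτ_def, one_div]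
    exact_mod_cast Real.rpow_inv_natCast_pow hk0.le (n := 2 * l) (by lia)
  have hτ3 : 3 ≤ τ ^ 2 := by
    refine le_of_pow_le_pow_left₀ (n := l) (by lia) (by positivity) ?_
    rw [← pow_mul, hτk]
    exact_mod_cast hk
  have hπ := gpi_mem_stdSimplex hrow
  have hB : ∀ a, ∑ b, |((gK A - Matrix.of fun _ v => gpi A v) ^ (2 * l) : Matrix V V ℝ) a b|
      ≤ ρ ^ (2 * l) * (√(gpiStar A))⁻¹ := fun a =>
    (sum_abs_le_l2opNorm_mul_sqrt_card _ a).trans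
      (mul_le_mul hop (sqrt_card_le_inv_sqrt_gpiStar hrow) (by positivity) (by positivity))
  have hlocal := (isReversibleChain_gK hA hA0 hrow).isLocalPSDSum_smul_diagonal_add hπ hl hτ hτ3
    hτk hB
  rw [diagonal_gpi_mul_gK hrow] at hlocal
  refine hlocal.smul_diagonal_add_mono (by lia) hπ.1
    ((mul_add_four_mul_div_le hk0.le hl1 (by positivity) hτ).trans_eq ?_)
  ring
end

section
/- Let k ≥ 1 be an integer and let X ∈ ℝ^{(k+1)×(k+1)} be a symmetric positive semidefinite matrix with rows and columns indexed by {0, 1, …, k} (index 0 playing the role of the root of a star and indices 1, …, k its children). Suppose X_{ii} = 1 for all i, and X_{ij} = 0 for all distinct i, j ∈ {1, …, k}. Then the average of the root–child entries satisfies (1/k)·Σ_{i=1}^{k} X_{0i} ≥ −1/√k. -/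
/-!
The matrix `X` is the Gram matrix of a positive semidefinite form. Cauchy–Schwarz for the root
vector, of norm at most one, and the sum of the `k` children bounds the square of the sum of the
root–child entries by the squared norm of that sum of children, which is at most `k` because the
children have norm at most one and distinct children have nonpositive inner products.
-/

open Matrix

section CauchySchwarz

variable {n ι R : Type*} [CommRing R] [LinearOrder R] [IsStrictOrderedRing R] [StarRing R]
  [TrivialStar R] {A : Matrix n n R}

theorem sq_dotProduct_mulVec_le_of_posSemidef [Fintype n] (hA : A.PosSemidef) (x y : n → R) :
    (x ⬝ᵥ A *ᵥ y) ^ 2 ≤ (x ⬝ᵥ A *ᵥ x) * (y ⬝ᵥ A *ᵥ y) := by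
  classical
  have hsymm : y ⬝ᵥ A *ᵥ x = x ⬝ᵥ A *ᵥ y := by
    have hAT : Aᵀ = A := (conjTranspose_eq_transpose_of_trivial A).symm.trans hA.isHermitian
    rw [dotProduct_mulVec, ← mulVec_transpose, hAT, dotProduct_comm]
  have hcs := (Matrix.toBilin' A).apply_mul_apply_le_of_forall_zero_le
    (fun z ↦ by simpa only [toBilin'_apply', star_trivial] using hA.dotProduct_mulVec_nonneg z) x y
  simpa only [toBilin'_apply', hsymm, ← sq] using hcs

theorem sq_sum_row_le_of_posSemidef [Fintype ι] (hA : A.PosSemidef) (r : n) (c : ι → n) :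
    (∑ i, A r (c i)) ^ 2 ≤ A r r * ∑ i, ∑ j, A (c i) (c j) := by
  classical
  -- Indexing by the root and the possibly repeated children reduces to a finite index type.
  have hstar := hA.submatrix fun o : Option ι ↦ o.elim r c
  have hcs := sq_dotProduct_mulVec_le_of_posSemidef hstar
    (Pi.single none 1) (fun o ↦ o.elim 0 fun _ ↦ 1)
  simpa [dotProduct, mulVec, Fintype.sum_option] using hcs

end CauchySchwarz

theorem sum_sum_le_sum_diag_of_offDiag_nonpos {ι M : Type*} [Fintype ι] [AddCommMonoid M]
    [PartialOrder M] [IsOrderedAddMonoid M] {A : Matrix ι ι M} (hA : Pairwise fun i j ↦ A i j ≤ 0) :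
    ∑ i, ∑ j, A i j ≤ ∑ i, A i i := by
  classical
  refine Finset.sum_le_sum fun i _ ↦ ?_
  rw [← Finset.add_sum_erase _ _ (Finset.mem_univ i)]
  exact add_le_of_nonpos_right <|
    Finset.sum_nonpos fun j hj ↦ hA (Finset.ne_of_mem_erase hj).symm

theorem abs_sum_row_le_sqrt_card {n ι : Type*} [Fintype ι] {X : Matrix n n ℝ}
    (hX : X.PosSemidef) {r : n} {c : ι → n} (hroot : X r r ≤ 1) (hdiag : ∀ i, X (c i) (c i) ≤ 1)
    (hoffdiag : Pairwise fun i j ↦ X (c i) (c j) ≤ 0) :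
    |∑ i, X r (c i)| ≤ √(Fintype.card ι) := by
  refine Real.abs_le_sqrt ?_
  have hchildren : ∑ i, ∑ j, X (c i) (c j) ≤ Fintype.card ι :=
    calc ∑ i, ∑ j, X (c i) (c j) ≤ ∑ i, X (c i) (c i) :=
          sum_sum_le_sum_diag_of_offDiag_nonpos (A := X.submatrix c c) hoffdiag
      _ ≤ ∑ _i : ι, 1 := Finset.sum_le_sum fun i _ ↦ hdiag i
      _ = Fintype.card ι := by simp
  calc (∑ i, X r (c i)) ^ 2 ≤ X r r * ∑ i, ∑ j, X (c i) (c j) := sq_sum_row_le_of_posSemidef hX r c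
    _ ≤ X r r * Fintype.card ι := mul_le_mul_of_nonneg_left hchildren hX.diag_nonneg
    _ ≤ Fintype.card ι := mul_le_of_le_one_left (Nat.cast_nonneg _) hroot

theorem star_psd_bound_general {n ι : Type*} [Fintype ι] [Nonempty ι] {X : Matrix n n ℝ}
    (hX : X.PosSemidef) {r : n} {c : ι → n} (hroot : X r r ≤ 1) (hdiag : ∀ i, X (c i) (c i) ≤ 1)
    (hoffdiag : Pairwise fun i j ↦ X (c i) (c j) ≤ 0) :
    |(1 / (Fintype.card ι : ℝ)) * ∑ i, X r (c i)| ≤ 1 / √(Fintype.card ι) := by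
  have hcard : (0 : ℝ) < Fintype.card ι := Nat.cast_pos.mpr Fintype.card_pos
  rw [one_div_mul_eq_div, abs_div, abs_of_pos hcard,
    div_le_div_iff₀ hcard (Real.sqrt_pos.mpr hcard), one_mul]
  calc |∑ i, X r (c i)| * √(Fintype.card ι) ≤ √(Fintype.card ι) * √(Fintype.card ι) := by
        gcongr
        exact abs_sum_row_le_sqrt_card hX hroot hdiag hoffdiag
    _ = Fintype.card ι := Real.mul_self_sqrt hcard.le

theorem star_psd_bound (k : ℕ) (hk : 1 ≤ k)
    (X : Matrix (Fin (k + 1)) (Fin (k + 1)) ℝ) (hX : X.PosSemidef)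
    (hdiag : ∀ i, X i i = 1)
    (hoffdiag : ∀ i j : Fin (k + 1), i ≠ 0 → j ≠ 0 → i ≠ j → X i j = 0) :
    -(1 / Real.sqrt k) ≤ (1 / (k : ℝ)) * ∑ i : Fin k, X 0 i.succ := by
  have : Nonempty (Fin k) := ⟨⟨0, hk⟩⟩
  have horth : Pairwise fun i j : Fin k ↦ X i.succ j.succ ≤ 0 := fun i j hij ↦
    (hoffdiag _ _ i.succ_ne_zero j.succ_ne_zero (Fin.succ_injective k |>.ne hij)).le
  simpa only [Fintype.card_fin] using
    neg_le_of_abs_le (star_psd_bound_general hX (hdiag 0).le (fun i ↦ (hdiag i.succ).le) horth)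
end

section
/- Let T be a finite tree with vertex set T, fix a root r ∈ T, and for φ : T → V define the weight w_r(φ) = π(φ(r)) · Π_{j ∈ T, j ≠ r} K_{φ(p_r(j)), φ(j)}, where p_r(j) is the neighbor of j on the path from j to r in T. Then for any two vertices i, j ∈ T at tree-distance d and any functions f, g : V → ℝ, Σ_{φ : T → V} w_r(φ) · ( Π_{(a,b)} Ξ_{φ(a),φ(b)} ) · f(φ(i)) · g(φ(j)) = ⟨f, K̄^d g⟩_π, where the inner product Π_{(a,b)} runs over the d edges (a,b) of the unique path from i to j in T. (This is the path-marginal identity for the signed stationary T-indexed random walk: the sign σ(i)σ(j) telescopes to the product of edge signs along the path.) -/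
open Matrix

/-- The weight of a map `φ : T → V` in the stationary `T`-indexed random walk rooted at
`r`: `w_r(φ) = π(φ(r)) ⬝ ∏_{j ≠ r} K_{φ(p_r(j)), φ(j)}`, where `p r j` is the parent of
`j` with respect to the root `r`. -/
noncomputable def treeWalkWeight {V T : Type*} [Fintype V] [Nonempty V] [Fintype T]
    [DecidableEq T] (A : Matrix V V ℝ) (p : T → T → T) (r : T) (φ : T → V) : ℝ :=
  gpi A (φ r) * ∏ j ∈ Finset.univ.erase r, gK A (φ (p r j)) (φ j)

/-!
By reversibility the weight of the tree-indexed walk does not depend on the root: moving the root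
along an edge `r s` only replaces `μ(φ r) K(φ r, φ s)` by `μ(φ s) K(φ s, φ r)`, since every other
vertex keeps its parent. So the tree may be rooted at the endpoint `i` of the path, and then each
vertex of the path is the parent of the next one. Conditionally on `φ i`, summing out the vertices
off the path, deepest first, contributes row sums of `K`, which are `1`; summing out the path from
its end `j` towards `i` applies `Ξ ⊙ K` to `g` once per edge.
-/

section SumOut

variable {ι R : Type*} {X : ι → Type*} [DecidableEq ι] [∀ i, Fintype (X i)]

/-- The function `F` of a configuration `φ` with the coordinates in `s` summed out: the sum of `F`
over all configurations that agree with `φ` off `s`. The result is again a function of all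
coordinates (it ignores those in `s`), as for `MeasureTheory.lmarginal`, so that the index type
does not change when sums are iterated. -/
def sumOut [AddCommMonoid R] (s : Finset ι) (F : (∀ i, X i) → R) (φ : ∀ i, X i) : R :=
  ∑ y : ∀ i : s, X i, F (Function.updateFinset φ s y)

section AddCommMonoid

variable [AddCommMonoid R] (F : (∀ i, X i) → R)

lemma sumOut_empty : sumOut ∅ F = F := by
  ext φ
  simp [sumOut]

lemma sumOut_singleton (i : ι) (φ : ∀ i, X i) :
    sumOut {i} F φ = ∑ x, F (Function.update φ i x) := by
  simp only [sumOut, Function.updateFinset_singleton]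
  exact Fintype.sum_equiv (Equiv.piUnique fun j : ({i} : Finset ι) => X j) _ _ fun _ => rfl

lemma sumOut_union {s t : Finset ι} (hst : Disjoint s t) :
    sumOut (s ∪ t) F = sumOut s (sumOut t F) := by
  ext φ
  simp only [sumOut, Function.updateFinset_updateFinset hst]
  rw [← (Equiv.piFinsetUnion X hst).sum_comp, Fintype.sum_prod_type]

lemma sumOut_insert {i : ι} {s : Finset ι} (hi : i ∉ s) :
    sumOut (insert i s) F = sumOut s (sumOut {i} F) := by
  rw [Finset.insert_eq, Finset.union_comm, sumOut_union F (Finset.disjoint_singleton_right.mpr hi)]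

lemma sumOut_univ [Fintype ι] (φ : ∀ i, X i) : sumOut Finset.univ F φ = ∑ ψ, F ψ := by
  let restrictUniv := (Equiv.subtypeUnivEquiv (Finset.mem_univ (α := ι))).symm.piCongrLeft' X
  refine (Fintype.sum_equiv restrictUniv _ _ fun ψ => congrArg F (funext fun i => ?_)).symm
  simp only [Function.updateFinset, Finset.mem_univ, ↓reduceDIte]
  rfl

end AddCommMonoid

lemma sumOut_mul_left [NonUnitalNonAssocSemiring R] {s : Finset ι} {F : (∀ i, X i) → R}
    (hF : DependsOn F (s : Set ι)ᶜ) (G : (∀ i, X i) → R) (φ : ∀ i, X i) :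
    sumOut s (fun ψ => F ψ * G ψ) φ = F φ * sumOut s G φ := by
  have hupdate (y : ∀ i : s, X i) : F (Function.updateFinset φ s y) = F φ :=
    hF fun i hi => dif_neg hi
  simp only [sumOut, hupdate, Finset.mul_sum]

end SumOut

section Kernel

variable {T V R α : Type*} [CommSemiring R]

lemma dependsOn_prod_range {s : ℕ → T} {n : ℕ} {U : Set T} (hs : ∀ t ≤ n, s t ∈ U)
    (M : Matrix V V R) :
    DependsOn (fun φ : T → V => ∏ t ∈ Finset.range n, M (φ (s t)) (φ (s (t + 1)))) U :=
  fun φ ψ h => Finset.prod_congr rfl fun t ht => by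
    have ht := Finset.mem_range.mp ht
    rw [h _ (hs t ht.le), h _ (hs (t + 1) ht)]

variable [DecidableEq T] [Fintype V]

lemma sumOut_prod_eq_one [LinearOrder α] {K : Matrix V V R} (hK : ∀ u, ∑ v, K u v = 1)
    {P : T → T} {depth : T → α} (s : Finset T) (hP : ∀ k ∈ s, depth (P k) < depth k) (φ : T → V) :
    sumOut s (fun ψ => ∏ k ∈ s, K (ψ (P k)) (ψ k)) φ = 1 := by
  induction s using Finset.induction_on_max_value depth with
  | empty => simp [sumOut_empty]
  | insert k s hk hmax ih =>
    have hPk : P k ≠ k := fun h => (hP k (Finset.mem_insert_self k s)).ne (by rw [h])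
    have hPs : ∀ j ∈ s, P j ≠ k := fun j hj h =>
      (hP j (Finset.mem_insert_of_mem hj)).not_ge (h ▸ hmax j hj)
    have hdep : DependsOn (fun ψ : T → V => ∏ j ∈ s, K (ψ (P j)) (ψ j))
        (({k} : Finset T) : Set T)ᶜ := fun ψ χ h =>
      Finset.prod_congr rfl fun j hj => by
        rw [h j (by simpa using ne_of_mem_of_not_mem hj hk), h (P j) (by simpa using hPs j hj)]
    have hsum : sumOut {k} (fun ψ => ∏ j ∈ insert k s, K (ψ (P j)) (ψ j))
        = fun ψ => ∏ j ∈ s, K (ψ (P j)) (ψ j) := by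
      ext ψ
      simp only [Finset.prod_insert hk, mul_comm (K _ _)]
      rw [sumOut_mul_left hdep, sumOut_singleton]
      simp [Function.update_of_ne hPk, hK]
    rw [sumOut_insert _ hk, hsum, ih fun j hj => hP j (Finset.mem_insert_of_mem hj)]

lemma sumOut_prod_sequence_mul [DecidableEq V] (M : Matrix V V R) {s : ℕ → T} {n : ℕ}
    (hs : Set.InjOn s (Set.Iic n)) (g : V → R) (φ : T → V) :
    sumOut ((Finset.range n).image fun t => s (t + 1))
        (fun ψ : T → V => (∏ t ∈ Finset.range n, M (ψ (s t)) (ψ (s (t + 1)))) * g (ψ (s n))) φ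
      = ((M ^ n) *ᵥ g) (φ (s 0)) := by
  induction n generalizing g with
  | zero => simp [sumOut_empty]
  | succ n ih =>
    have hne {t : ℕ} (ht : t ≤ n) : s t ≠ s (n + 1) := fun h =>
      (Nat.lt_succ_of_le ht).ne (hs (Set.mem_Iic.mpr (by lia)) Set.self_mem_Iic h)
    have hnotMem : s (n + 1) ∉ (Finset.range n).image fun t => s (t + 1) := by
      simp only [Finset.mem_image, Finset.mem_range, not_exists, not_and]
      exact fun t ht => hne ht
    have hdep : DependsOn (fun ψ : T → V => ∏ t ∈ Finset.range n, M (ψ (s t)) (ψ (s (t + 1))))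
        (({s (n + 1)} : Finset T) : Set T)ᶜ :=
      dependsOn_prod_range (fun t ht => by simpa using hne ht) M
    have hsum : sumOut {s (n + 1)} (fun ψ : T → V =>
          (∏ t ∈ Finset.range (n + 1), M (ψ (s t)) (ψ (s (t + 1)))) * g (ψ (s (n + 1))))
        = fun ψ => (∏ t ∈ Finset.range n, M (ψ (s t)) (ψ (s (t + 1)))) * (M *ᵥ g) (ψ (s n)) := by
      ext ψ
      simp only [Finset.prod_range_succ, mul_assoc]
      rw [sumOut_mul_left hdep, sumOut_singleton]
      simp [Function.update_of_ne (hne le_rfl), Matrix.mulVec, dotProduct]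
    rw [Finset.range_add_one, Finset.image_insert, sumOut_insert _ hnotMem,
      ← Finset.range_add_one, hsum, ih (hs.mono (Set.Iic_subset_Iic.mpr n.le_succ)),
      pow_succ, ← Matrix.mulVec_mulVec]

end Kernel

section ParentMap

variable {T : Type*} {G : SimpleGraph T} {r s : T} {P Q : T → T}

/-- `P` sends every vertex `j` other than the root `r` to a neighbour that is one step closer to
`r`. In a tree this neighbour is unique and lies on the path from `r` to `j`; the value `P r` is
unconstrained. -/
def IsParentMap (G : SimpleGraph T) (r : T) (P : T → T) : Prop :=
  ∀ j, j ≠ r → G.Adj (P j) j ∧ G.dist r (P j) + 1 = G.dist r j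

lemma dist_getVert_of_isPath (hG : G.IsTree) {i j : T} {q : G.Walk i j} (hq : q.IsPath) {t : ℕ}
    (ht : t ≤ q.length) : G.dist i (q.getVert t) = t := by
  obtain ⟨w, hw, hlength⟩ := hG.connected.exists_path_of_dist i (q.getVert t)
  rw [← hlength, (hG.existsUnique_path _ _).unique hw (hq.take t), SimpleGraph.Walk.take_length,
    min_eq_left ht]

lemma eq_of_adj_of_dist_lt (hG : G.IsTree) {a b j : T} (ha : G.Adj a j) (hb : G.Adj b j)
    (hra : G.dist r a < G.dist r j) (hrb : G.dist r b < G.dist r j) : a = b := by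
  have geodesic_through {c : T} (hc : G.Adj c j) (hrc : G.dist r c < G.dist r j) :
      ∃ w : G.Walk r c, (w.concat hc).IsPath := by
    obtain ⟨w, hw⟩ := hG.connected.exists_walk_length_eq_dist r c
    have hdist := hG.dist_eq_dist_add_one_of_adj r hc
    exact ⟨w, (w.concat hc).isPath_of_length_eq_dist (by rw [w.length_concat]; lia)⟩
  obtain ⟨wa, hwa⟩ := geodesic_through ha hra
  obtain ⟨wb, hwb⟩ := geodesic_through hb hrb
  rw [← wa.penultimate_concat ha, (hG.existsUnique_path r j).unique hwa hwb,
    wb.penultimate_concat hb]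

namespace IsParentMap

lemma dist_lt (hP : IsParentMap G r P) {j : T} (hj : j ≠ r) : G.dist r (P j) < G.dist r j := by
  have := (hP j hj).2
  lia

lemma apply_eq_of_adj_of_dist_lt (hG : G.IsTree) (hP : IsParentMap G r P) {a j : T} (ha : G.Adj a j)
    (hra : G.dist r a < G.dist r j) : P j = a := by
  have hj : j ≠ r := by
    rintro rfl
    simp at hra
  exact eq_of_adj_of_dist_lt hG (hP j hj).1 ha (hP.dist_lt hj) hra

lemma apply_getVert_succ (hG : G.IsTree) {i j : T} (hP : IsParentMap G i P) {q : G.Walk i j}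
    (hq : q.IsPath) {t : ℕ} (ht : t < q.length) : P (q.getVert (t + 1)) = q.getVert t := by
  refine hP.apply_eq_of_adj_of_dist_lt hG (q.adj_getVert_succ ht) ?_
  rw [dist_getVert_of_isPath hG hq ht.le, dist_getVert_of_isPath hG hq ht]
  exact t.lt_succ_self

lemma apply_of_adj_root (hG : G.IsTree) (hP : IsParentMap G r P) (hrs : G.Adj r s) : P s = r :=
  hP.apply_eq_of_adj_of_dist_lt hG hrs (by simp [SimpleGraph.dist_eq_one_iff_adj.mpr hrs])

lemma apply_eq_of_adj_roots (hG : G.IsTree) (hP : IsParentMap G r P) (hQ : IsParentMap G s Q)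
    (hrs : G.Adj r s) {k : T} (hkr : k ≠ r) (hks : k ≠ s) : P k = Q k := by
  have hdist_step (x : T) : G.dist r x ≤ G.dist s x + 1 ∧ G.dist s x ≤ G.dist r x + 1 := by
    have h₁ := hG.connected.dist_triangle (u := r) (v := s) (w := x)
    have h₂ := hG.connected.dist_triangle (u := s) (v := r) (w := x)
    rw [SimpleGraph.dist_eq_one_iff_adj.mpr hrs] at h₁
    rw [SimpleGraph.dist_eq_one_iff_adj.mpr hrs.symm] at h₂
    lia
  have hne : G.dist r k ≠ G.dist s k := by
    rw [G.dist_comm, G.dist_comm (u := s)]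
    exact hG.dist_ne_of_adj k hrs
  -- The parent of `k` towards the farther of `r` and `s` is also closer to the other one.
  rcases hne.lt_or_gt with h | h
  · refine (hQ.apply_eq_of_adj_of_dist_lt hG (hP k hkr).1 ?_).symm
    have := (hP k hkr).2
    have := hdist_step (P k)
    lia
  · refine hP.apply_eq_of_adj_of_dist_lt hG (hQ k hks).1 ?_
    have := (hQ k hks).2
    have := hdist_step (Q k)
    lia

end IsParentMap

section PathTail

variable [DecidableEq T] {i j : T} {q : G.Walk i j}

/-- The vertices of the walk `q` after its first one; for a path from the root these are the
non-root vertices of the path. -/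
def pathTail (q : G.Walk i j) : Finset T :=
  (Finset.range q.length).image fun t => q.getVert (t + 1)

variable [Fintype T]

lemma pathTail_subset_erase (hq : q.IsPath) : pathTail q ⊆ Finset.univ.erase i := by
  intro k hk
  obtain ⟨t, ht, rfl⟩ := Finset.mem_image.mp hk
  refine Finset.mem_erase.mpr ⟨fun h => ?_, Finset.mem_univ _⟩
  exact t.succ_ne_zero ((hq.getVert_eq_start_iff (Finset.mem_range.mp ht)).mp h)

lemma getVert_notMem_erase_sdiff_pathTail {t : ℕ} (ht : t ≤ q.length) :
    q.getVert t ∉ Finset.univ.erase i \ pathTail q := by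
  cases t with
  | zero => simp
  | succ t =>
    exact fun h => (Finset.mem_sdiff.mp h).2
      (Finset.mem_image_of_mem _ (Finset.mem_range.mpr ht))

lemma prod_pathTail_mul_prod_sdiff {M : Type*} [CommMonoid M] (hG : G.IsTree)
    (hP : IsParentMap G i P) (hq : q.IsPath) (h : T → T → M) :
    (∏ t ∈ Finset.range q.length, h (q.getVert t) (q.getVert (t + 1)))
        * ∏ k ∈ Finset.univ.erase i \ pathTail q, h (P k) k
      = ∏ k ∈ Finset.univ.erase i, h (P k) k := by
  have hinj : Set.InjOn (fun t => q.getVert (t + 1)) (Finset.range q.length) :=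
    fun s hs t ht hst => Nat.succ_injective <|
      hq.getVert_injOn (Finset.mem_range.mp hs) (Finset.mem_range.mp ht) hst
  rw [← Finset.prod_sdiff (pathTail_subset_erase hq), mul_comm, pathTail, Finset.prod_image hinj]
  congr 1
  refine Finset.prod_congr rfl fun t ht => ?_
  rw [hP.apply_getVert_succ hG hq (Finset.mem_range.mp ht)]

end PathTail

end ParentMap

section TreeWeight

variable {T V R : Type*} [Fintype T] [DecidableEq T] [CommSemiring R] {G : SimpleGraph T}
  {μ : V → R} {K : Matrix V V R}

/-- The weight of a configuration `φ` in the tree-indexed walk with initial weights `μ` at the root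
`r`, transition matrix `K` and parent map `P`; `treeWalkWeight` is the case of the stationary walk
on a weighted graph. -/
def treeWeight (μ : V → R) (K : Matrix V V R) (P : T → T) (r : T) (φ : T → V) : R :=
  μ (φ r) * ∏ j ∈ Finset.univ.erase r, K (φ (P j)) (φ j)

lemma treeWeight_eq_of_adj (hμK : ∀ u v, μ u * K u v = μ v * K v u) (hG : G.IsTree) {r s : T}
    {P Q : T → T} (hP : IsParentMap G r P) (hQ : IsParentMap G s Q) (hrs : G.Adj r s)
    (φ : T → V) : treeWeight μ K P r φ = treeWeight μ K Q s φ := by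
  have hs : s ∈ Finset.univ.erase r := by simp [hrs.ne']
  have hr : r ∈ Finset.univ.erase s := by simp [hrs.ne]
  rw [treeWeight, treeWeight, ← Finset.mul_prod_erase _ _ hs, ← Finset.mul_prod_erase _ _ hr,
    hP.apply_of_adj_root hG hrs, hQ.apply_of_adj_root hG hrs.symm, ← mul_assoc, ← mul_assoc, hμK,
    Finset.erase_right_comm]
  congr 1
  refine Finset.prod_congr rfl fun k hk => ?_
  simp only [Finset.mem_erase, Finset.mem_univ, and_true] at hk
  rw [hP.apply_eq_of_adj_roots hG hQ hrs hk.1 hk.2]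

lemma treeWeight_root_indep (hμK : ∀ u v, μ u * K u v = μ v * K v u) (hG : G.IsTree)
    {p : T → T → T} (hp : ∀ r, IsParentMap G r (p r)) (r s : T) (φ : T → V) :
    treeWeight μ K (p r) r φ = treeWeight μ K (p s) s φ := by
  obtain ⟨w⟩ := hG.connected r s
  induction w with
  | nil => rfl
  | cons hadj _ ih => rw [treeWeight_eq_of_adj hμK hG (hp _) (hp _) hadj, ih]

variable [Fintype V] [DecidableEq V]

lemma sumOut_nonroot_eq_mulVec (hK : ∀ u, ∑ v, K u v = 1) (Ξ : Matrix V V R)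
    (hG : G.IsTree) {i j : T} {P : T → T} (hP : IsParentMap G i P) {q : G.Walk i j}
    (hq : q.IsPath) (g : V → R) (φ : T → V) :
    sumOut (Finset.univ.erase i) (fun ψ => (∏ k ∈ Finset.univ.erase i, K (ψ (P k)) (ψ k))
        * (∏ t ∈ Finset.range q.length, Ξ (ψ (q.getVert t)) (ψ (q.getVert (t + 1)))) * g (ψ j)) φ
      = ((Ξ ⊙ K) ^ q.length *ᵥ g) (φ i) := by
  let offPath := Finset.univ.erase i \ pathTail q
  let pathFactor : (T → V) → R := fun ψ =>
    (∏ t ∈ Finset.range q.length, (Ξ ⊙ K) (ψ (q.getVert t)) (ψ (q.getVert (t + 1))))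
      * g (ψ (q.getVert q.length))
  have hfactor (ψ : T → V) : (∏ k ∈ Finset.univ.erase i, K (ψ (P k)) (ψ k))
        * (∏ t ∈ Finset.range q.length, Ξ (ψ (q.getVert t)) (ψ (q.getVert (t + 1)))) * g (ψ j)
      = pathFactor ψ * ∏ k ∈ offPath, K (ψ (P k)) (ψ k) := by
    rw [← prod_pathTail_mul_prod_sdiff hG hP hq fun a b => K (ψ a) (ψ b)]
    simp only [pathFactor, offPath, Matrix.hadamard_apply, Finset.prod_mul_distrib,
      q.getVert_length]
    ring
  have hdep : DependsOn pathFactor (offPath : Set T)ᶜ := fun ψ χ h =>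
    congrArg₂ (· * ·)
      (dependsOn_prod_range (fun t ht => getVert_notMem_erase_sdiff_pathTail ht) _ h)
      (congrArg g (h _ (getVert_notMem_erase_sdiff_pathTail le_rfl)))
  have hdist : ∀ k ∈ offPath, G.dist i (P k) < G.dist i k := fun k hk =>
    hP.dist_lt (Finset.ne_of_mem_erase (Finset.mem_sdiff.mp hk).1)
  have hsumOff : sumOut offPath (fun ψ => pathFactor ψ * ∏ k ∈ offPath, K (ψ (P k)) (ψ k))
      = pathFactor := by
    ext ψ
    rw [sumOut_mul_left hdep, sumOut_prod_eq_one hK offPath hdist, mul_one]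
  simp only [hfactor]
  rw [← Finset.union_sdiff_of_subset (pathTail_subset_erase hq),
    sumOut_union _ Finset.disjoint_sdiff, hsumOff]
  exact (sumOut_prod_sequence_mul _ hq.getVert_injOn g φ).trans (by rw [q.getVert_zero])

end TreeWeight

theorem signed_tree_indexed_walk_marginals_general {T V R : Type*} [Fintype T] [DecidableEq T]
    [Fintype V] [DecidableEq V] [CommSemiring R] {μ : V → R} {K : Matrix V V R}
    (hμK : ∀ u v, μ u * K u v = μ v * K v u) (hK : ∀ u, ∑ v, K u v = 1) (Ξ : Matrix V V R)
    {G : SimpleGraph T} (hG : G.IsTree) {p : T → T → T} (hp : ∀ r, IsParentMap G r (p r))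
    (r : T) {i j : T} {q : G.Walk i j} (hq : q.IsPath) (f g : V → R) :
    ∑ φ : T → V, treeWeight μ K (p r) r φ
        * (∏ t ∈ Finset.range q.length, Ξ (φ (q.getVert t)) (φ (q.getVert (t + 1))))
        * f (φ i) * g (φ j)
      = ∑ u, μ u * f u * ((Ξ ⊙ K) ^ q.length *ᵥ g) u := by
  rcases isEmpty_or_nonempty (T → V) with hempty | ⟨⟨φ₀⟩⟩
  · have : IsEmpty V := ⟨fun v => hempty.false fun _ => v⟩
    simp only [Finset.univ_eq_empty, Finset.sum_empty]
  have hdep : DependsOn (fun φ : T → V => μ (φ i) * f (φ i))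
      ((Finset.univ.erase i : Finset T) : Set T)ᶜ := by
    intro φ ψ h
    simp only [h i (by simp)]
  rw [← sumOut_univ _ φ₀, ← Finset.insert_erase (Finset.mem_univ i), Finset.insert_eq,
    sumOut_union _ (by simp), sumOut_singleton]
  refine Finset.sum_congr rfl fun u _ => ?_
  calc sumOut (Finset.univ.erase i) (fun φ => treeWeight μ K (p r) r φ
        * (∏ t ∈ Finset.range q.length, Ξ (φ (q.getVert t)) (φ (q.getVert (t + 1))))
        * f (φ i) * g (φ j)) (Function.update φ₀ i u)
      = sumOut (Finset.univ.erase i) (fun φ => μ (φ i) * f (φ i)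
          * ((∏ k ∈ Finset.univ.erase i, K (φ (p i k)) (φ k))
            * (∏ t ∈ Finset.range q.length, Ξ (φ (q.getVert t)) (φ (q.getVert (t + 1))))
            * g (φ j))) (Function.update φ₀ i u) := by
        congr 1
        ext φ
        rw [treeWeight_root_indep hμK hG hp r i, treeWeight]
        ring
    _ = μ u * f u * ((Ξ ⊙ K) ^ q.length *ᵥ g) u := by
        rw [sumOut_mul_left hdep, sumOut_nonroot_eq_mulVec hK Ξ hG (hp i) hq,
          Function.update_self]

section WeightedGraph

variable {V : Type*} [Fintype V] {A : Matrix V V ℝ}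

lemma gpi_mul_gK_comm (hA : A.IsSymm) (hdeg : ∀ u, gdeg A u ≠ 0) (u v : V) :
    gpi A u * gK A u v = gpi A v * gK A v u := by
  have hflow (a b : V) : gpi A a * gK A a b = A a b / gm A := by
    rw [gpi, gK, Matrix.of_apply, mul_comm, div_mul_div_cancel₀ (hdeg a)]
  rw [hflow, hflow, hA.apply]

lemma sum_gK (hdeg : ∀ u, gdeg A u ≠ 0) (u : V) : ∑ v, gK A u v = 1 := by
  simp only [gK, Matrix.of_apply, ← Finset.sum_div]
  exact div_self (hdeg u)

end WeightedGraph

theorem signed_tree_indexed_walk_marginals {V T : Type*} [Fintype V] [DecidableEq V]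
    [Nonempty V] [Fintype T] [DecidableEq T]
    (A : Matrix V V ℝ) (hA : A.IsSymm) (hA0 : ∀ u v, 0 ≤ A u v)
    (hrow : ∀ u, 0 < ∑ v, A u v)
    (Ξ : Matrix V V ℝ) (hΞsym : Ξ.IsSymm) (hΞ : ∀ u v, Ξ u v = 1 ∨ Ξ u v = -1)
    (G : SimpleGraph T) (hG : G.IsTree)
    (p : T → T → T)
    (hp : ∀ r j, j ≠ r → G.Adj (p r j) j ∧ G.dist r (p r j) + 1 = G.dist r j)
    (r i j : T) (q : G.Walk i j) (hq : q.IsPath) (f g : V → ℝ) :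
    ∑ φ : T → V, treeWalkWeight A p r φ
        * (∏ t ∈ Finset.range q.length, Ξ (φ (q.getVert t)) (φ (q.getVert (t + 1))))
        * f (φ i) * g (φ j)
      = ∑ u, gpi A u * f u * ((Matrix.hadamard Ξ (gK A) ^ q.length) *ᵥ g) u :=
  signed_tree_indexed_walk_marginals_general (gpi_mul_gK_comm hA fun u => (hrow u).ne')
    (sum_gK fun u => (hrow u).ne') Ξ hG hp r hq f g
end
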